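/- Let B : [0,∞) → ℝ be any function, x₀ ∈ ℝ, R₀ ≥ 0, and define X(t) := x₀ + B(L((t − R₀)⁺)) and R(t) := S(L((t − R₀)⁺)) + R₀ − t for t ≥ 0. Fix t ≥ 0 and set Λ := L((t − R₀)⁺), S̃(r) := S(r + Λ) − S(Λ), B̃(r) := B(r + Λ) − B(Λ), and L̃(u) := inf{r > 0 : S̃(r) > u}. Then for every s ≥ 0: X(t + s) = X(t) + B̃(L̃((s − R(t))⁺)) and R(t + s) = S̃(L̃((s − R(t))⁺)) + R(t) − s. -/

import Mathlib

/-!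
Since `S` is positive on `(0, ∞)`, passage above `u⁺` is the same as passage above `u`, so the
truncation in `L ((t - R₀)⁺)` can be ignored; strict monotonicity of `S` gives the same for the
shifted path `S̃`. What remains is the additivity of first passage: if the level `v` is first passed
no earlier than time `a`, then it is passed `a` time units after `S (· + a) - S a` passes the level
`v - S a`. For `a = Λ` and `v = t + s - R₀` this second level is `s - R t`.
-/

open Set Filter

/-- The right-continuous inverse `L` of a path `S`, as a function of the level. If `S` never exceeds
the level, this is the junk value `0` instead of `∞`. -/
noncomputable def firstPassage (S : ℝ → ℝ) (u : ℝ) : ℝ :=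
  sInf {r : ℝ | 0 < r ∧ u < S r}

/-- The path of `f` restarted at time `a`, from the value `0`; the `B̃` and `S̃` of the paper. -/
def shiftedPath {E : Type*} [Sub E] (f : ℝ → E) (a r : ℝ) : E :=
  f (r + a) - f a

/-- The time `L ((t - R₀)⁺)` that the clock `S` shows at physical time `t`, after an initial waiting
time `R₀`. -/
noncomputable def operationalTime (S : ℝ → ℝ) (R₀ t : ℝ) : ℝ :=
  firstPassage S (max (t - R₀) 0)

/-- The process `X`: the path `B` started at `x₀` and run in the operational time of `S`. -/
noncomputable def timeChangedPath {E : Type*} [Add E] (B : ℝ → E) (S : ℝ → ℝ) (x₀ : E)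
    (R₀ t : ℝ) : E :=
  x₀ + B (operationalTime S R₀ t)

/-- The process `R`: the time that remains at `t` until the clock `S`, delayed by `R₀`, moves on. -/
noncomputable def overshoot (S : ℝ → ℝ) (R₀ t : ℝ) : ℝ :=
  S (operationalTime S R₀ t) + R₀ - t

section FirstPassage

variable {S : ℝ → ℝ} {a r u v : ℝ}

lemma firstPassage_nonneg (S : ℝ → ℝ) (u : ℝ) : 0 ≤ firstPassage S u :=
  Real.sInf_nonneg fun _ hr => hr.1.le

lemma firstPassage_le (hr : 0 < r) (hu : u < S r) : firstPassage S u ≤ r :=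
  csInf_le ⟨0, fun _ hq => hq.1.le⟩ ⟨hr, hu⟩

lemma le_firstPassage (hu : ∃ r, 0 < r ∧ u < S r) (h : ∀ r, 0 < r → u < S r → a ≤ r) :
    a ≤ firstPassage S u :=
  le_csInf hu fun r hr => h r hr.1 hr.2

lemma firstPassage_le_firstPassage (hv : ∃ r, 0 < r ∧ v < S r) (huv : u ≤ v) :
    firstPassage S u ≤ firstPassage S v :=
  le_firstPassage hv fun _ hr hvr => firstPassage_le hr (huv.trans_lt hvr)

lemma firstPassage_max_zero (hS : ∀ r, 0 < r → 0 < S r) (u : ℝ) :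
    firstPassage S (max u 0) = firstPassage S u := by
  have h : ∀ r, 0 < r ∧ max u 0 < S r ↔ 0 < r ∧ u < S r := fun r =>
    and_congr_right fun hr => by simp [hS r hr]
  simp only [firstPassage, h]

lemma firstPassage_eq_shiftedPath_add (hS : MonotoneOn S (Ici 0)) (ha : 0 ≤ a)
    (hv : ∃ r, 0 < r ∧ v < S r) (hav : a ≤ firstPassage S v) :
    firstPassage S v = firstPassage (shiftedPath S a) (v - S a) + a := by
  have passes_iff (r : ℝ) : v - S a < shiftedPath S a r ↔ v < S (r + a) :=
    sub_lt_sub_iff_right (S a)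
  have passes_later {q r : ℝ} (hq : 0 < q) (hqr : q ≤ r) (hvq : v < S q) : v < S r :=
    hvq.trans_le (hS hq.le (hq.le.trans hqr) hqr)
  apply le_antisymm
  · rw [← sub_le_iff_le_add]
    obtain ⟨q, hq, hvq⟩ := hv
    refine le_firstPassage ⟨q, hq, (passes_iff q).2 (passes_later hq (by linarith) hvq)⟩ ?_
    intro r hr hvr
    rw [sub_le_iff_le_add]
    exact firstPassage_le (by linarith) ((passes_iff r).1 hvr)
  · refine le_firstPassage hv fun r hr hvr => ?_
    have har : a ≤ r := hav.trans (firstPassage_le hr hvr)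
    -- The passage time `r` may equal `a`, which the shifted path excludes.
    refine le_of_forall_pos_le_add fun ε hε => ?_
    have hvrε : v < S (r + ε - a + a) := passes_later hr (by linarith) hvr
    linarith [firstPassage_le (by linarith) ((passes_iff (r + ε - a)).2 hvrε)]

end FirstPassage

section Restart

variable {S : ℝ → ℝ} {R₀ s t : ℝ}

lemma operationalTime_eq_firstPassage (hS : ∀ r, 0 < r → 0 < S r) (R₀ t : ℝ) :
    operationalTime S R₀ t = firstPassage S (t - R₀) :=
  firstPassage_max_zero hS (t - R₀)

lemma shiftedPath_pos {a r : ℝ} (hS : StrictMonoOn S (Ici 0)) (ha : 0 ≤ a) (hr : 0 < r) :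
    0 < shiftedPath S a r :=
  sub_pos.2 (hS ha (add_nonneg hr.le ha) (lt_add_of_pos_left a hr))

lemma operationalTime_add (hS₀ : 0 ≤ S 0) (hS : StrictMonoOn S (Ici 0))
    (hS_top : Tendsto S atTop atTop) (hs : 0 ≤ s) :
    operationalTime S R₀ (t + s) =
      operationalTime (shiftedPath S (operationalTime S R₀ t)) (overshoot S R₀ t) s +
        operationalTime S R₀ t := by
  have hS_pos : ∀ r, 0 < r → 0 < S r := fun r hr =>
    hS₀.trans_lt (hS self_mem_Ici hr.le hr)
  have hpass : ∃ r, 0 < r ∧ t + s - R₀ < S r :=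
    ((eventually_gt_atTop 0).and (hS_top.eventually_gt_atTop _)).exists
  set Λ := operationalTime S R₀ t with hΛ
  have hΛ_nonneg : 0 ≤ Λ := firstPassage_nonneg S _
  have hΛ_le : Λ ≤ firstPassage S (t + s - R₀) := by
    rw [hΛ, operationalTime_eq_firstPassage hS_pos]
    exact firstPassage_le_firstPassage hpass (by linarith)
  have hlevel : s - overshoot S R₀ t = t + s - R₀ - S Λ := by
    rw [overshoot, ← hΛ]
    ring
  rw [operationalTime_eq_firstPassage hS_pos,
    operationalTime_eq_firstPassage (fun _ => shiftedPath_pos hS hΛ_nonneg), hlevel]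
  exact firstPassage_eq_shiftedPath_add hS.monotoneOn hΛ_nonneg hpass hΛ_le

theorem subdiffusion_overshoot_shift_identity_general {E : Type*} [AddCommGroup E]
    (B : ℝ → E) (x₀ : E) (hS₀ : 0 ≤ S 0) (hS : StrictMonoOn S (Ici 0))
    (hS_top : Tendsto S atTop atTop) (hs : 0 ≤ s) :
    timeChangedPath B S x₀ R₀ (t + s) =
        timeChangedPath (shiftedPath B (operationalTime S R₀ t))
          (shiftedPath S (operationalTime S R₀ t))
          (timeChangedPath B S x₀ R₀ t) (overshoot S R₀ t) s ∧
      overshoot S R₀ (t + s) =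
        overshoot (shiftedPath S (operationalTime S R₀ t)) (overshoot S R₀ t) s := by
  have hadd := operationalTime_add (R₀ := R₀) (t := t) hS₀ hS hS_top hs
  constructor
  · simp only [timeChangedPath, hadd, shiftedPath]
    abel
  · rw [overshoot, hadd]
    simp only [overshoot, shiftedPath]
    ring

end Restart

section Drift

variable {κ : ℝ} {S : ℝ → ℝ}

lemma strictMonoOn_of_drift (hκ : 0 < κ)
    (hdrift : ∀ ⦃a b : ℝ⦄, 0 ≤ a → a ≤ b → κ * (b - a) ≤ S b - S a) :
    StrictMonoOn S (Ici 0) := fun _ ha _ _ hab =>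
  sub_pos.1 ((mul_pos hκ (sub_pos.2 hab)).trans_le (hdrift ha hab.le))

lemma tendsto_atTop_of_drift (hκ : 0 < κ) (hdrift : ∀ b, 0 ≤ b → κ * b ≤ S b - S 0) :
    Tendsto S atTop atTop := by
  have hline : Tendsto (fun b => κ * b + S 0) atTop atTop :=
    tendsto_atTop_add_const_right _ _ (tendsto_id.const_mul_atTop hκ)
  refine tendsto_atTop_mono' _ ?_ hline
  filter_upwards [eventually_ge_atTop 0] with b hb
  linarith [hdrift b hb]

end Drift

/-- Pathwise Markov-type identity for the pair `(X, R)`: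
the increment of `(X, R)` after time `t` is the same functional of the shifted pair
`(B̃, S̃)` started at `(X t, R t)`. -/
theorem subdiffusion_overshoot_shift_identity
    (κ : ℝ) (S L : ℝ → ℝ)
    (hκ : 0 < κ)
    (hS0 : S 0 = 0)
    (hSmono : ∀ ⦃a b : ℝ⦄, 0 ≤ a → a ≤ b → S a ≤ S b)
    (hSrc : ∀ a : ℝ, 0 ≤ a → ContinuousWithinAt S (Set.Ici a) a)
    (hdrift : ∀ ⦃a b : ℝ⦄, 0 ≤ a → a ≤ b → κ * (b - a) ≤ S b - S a)
    (hL : ∀ t : ℝ, L t = sInf {r : ℝ | 0 < r ∧ t < S r})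
    (B : ℝ → ℝ) (x₀ R₀ : ℝ) (hR₀ : 0 ≤ R₀)
    (X R : ℝ → ℝ)
    (hX : ∀ u : ℝ, X u = x₀ + B (L (max (u - R₀) 0)))
    (hR : ∀ u : ℝ, R u = S (L (max (u - R₀) 0)) + R₀ - u)
    (t : ℝ) (ht : 0 ≤ t)
    (Λ : ℝ) (hΛ : Λ = L (max (t - R₀) 0))
    (Stil Btil Ltil : ℝ → ℝ)
    (hStil : ∀ r : ℝ, Stil r = S (r + Λ) - S Λ)
    (hBtil : ∀ r : ℝ, Btil r = B (r + Λ) - B Λ)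
    (hLtil : ∀ u : ℝ, Ltil u = sInf {r : ℝ | 0 < r ∧ u < Stil r}) :
    ∀ s : ℝ, 0 ≤ s →
      X (t + s) = X t + Btil (Ltil (max (s - R t) 0)) ∧
      R (t + s) = Stil (Ltil (max (s - R t) 0)) + R t - s := by
  intro s hs
  obtain rfl : L = firstPassage S := funext hL
  obtain rfl : X = timeChangedPath B S x₀ R₀ := funext hX
  obtain rfl : R = overshoot S R₀ := funext hR
  obtain rfl : Λ = operationalTime S R₀ t := hΛ
  obtain rfl : Stil = shiftedPath S (operationalTime S R₀ t) := funext hStil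
  obtain rfl : Btil = shiftedPath B (operationalTime S R₀ t) := funext hBtil
  obtain rfl : Ltil = firstPassage (shiftedPath S (operationalTime S R₀ t)) := funext hLtil
  exact subdiffusion_overshoot_shift_identity_general B x₀ hS0.ge (strictMonoOn_of_drift hκ hdrift)
    (tendsto_atTop_of_drift hκ fun b hb => by simpa using hdrift le_rfl hb) hs
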